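/- arXiv:1004.3723 — 8 statements merged into one kernel-verified Lean document; each statement's English description precedes it below -/
import Mathlib

section
/- Let X be an involutive rack and let a, b, c ∈ X be such that a ⊳ a = a. If b ⊳ a = c ⊳ a and a ⊳ b = c ⊳ b, then a ⊳ (b ⊳ a) = b ⊳ a. -/
open Quandles

theorem act_act_eq_of_act_eq {S : Type*} [Shelf S] {a b c x y : S}
    (hb : a ◃ b = c ◃ b) (hxy : a ◃ y = c ◃ x) : a ◃ (b ◃ y) = c ◃ (b ◃ x) :=
  calc
    a ◃ (b ◃ y) = (a ◃ b) ◃ (a ◃ y) := Shelf.self_distrib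
    _ = (c ◃ b) ◃ (c ◃ x) := by rw [hb, hxy]
    _ = c ◃ (b ◃ x) := Shelf.self_distrib.symm

/-- In a rack, `hbx` and `hcx` for some `x` amount to `b ◃⁻¹ a = c ◃⁻¹ a`, which is
`b ◃ a = c ◃ a` when the rack is involutory. -/
theorem involutions_abc_general {S : Type*} [Shelf S] {a b c x : S}
    (ha : a ◃ a = a) (hbx : b ◃ x = a) (hcx : c ◃ x = a) (hb : a ◃ b = c ◃ b) :
    a ◃ (b ◃ a) = c ◃ a :=
  calc
    a ◃ (b ◃ a) = c ◃ (b ◃ x) := act_act_eq_of_act_eq hb (ha.trans hcx.symm)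
    _ = c ◃ a := by rw [hbx]

/-- Let X be an involutive rack and let a, b, c ∈ X be such that a ⊳ a = a.
If b ⊳ a = c ⊳ a and a ⊳ b = c ⊳ b, then a ⊳ (b ⊳ a) = b ⊳ a. -/
theorem involutions_abc {X : Type*} [Rack X] (hinv : Rack.IsInvolutory X) (a b c : X)
    (ha : a ◃ a = a) (h1 : b ◃ a = c ◃ a) (h2 : a ◃ b = c ◃ b) :
    a ◃ (b ◃ a) = b ◃ a := by
  have hc : c ◃ (b ◃ a) = a := by rw [h1, hinv c a]
  exact (involutions_abc_general ha (hinv b a) hc h2).trans h1.symm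
end

section
/- Let X be a rack, let k ∈ ℕ, let i_1, …, i_k, l ∈ X, and let ε_1, …, ε_k ∈ {1, −1}. If l is a fixed point of the permutation φ_{i_1}^{ε_1} φ_{i_2}^{ε_2} ⋯ φ_{i_k}^{ε_k}, then the element x_{i_1}^{ε_1} x_{i_2}^{ε_2} ⋯ x_{i_k}^{ε_k} of the enveloping group G_X commutes with x_l. Conversely, if X is injective and x_{i_1}^{ε_1} x_{i_2}^{ε_2} ⋯ x_{i_k}^{ε_k} commutes with x_l in G_X, then l is a fixed point of φ_{i_1}^{ε_1} φ_{i_2}^{ε_2} ⋯ φ_{i_k}^{ε_k}. -/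
open Quandles

/-!
In `G_X` we have `x_{i ▷ j} = x_i x_j x_i⁻¹`, that is, `j ↦ x_j` intertwines the translation `φ_i`
with conjugation by `x_i`. Intertwining survives products and inverses, so a word `w` in the `φ_i`
and the corresponding word `g` in the `x_i` satisfy `x_{w l} = g x_l g⁻¹`. Hence `g` commutes with
`x_l` exactly when `x_{w l} = x_l`.
-/

theorem prod_ofFn_prodMk {A B : Type*} [Monoid A] [Monoid B] {k : ℕ} (a : Fin k → A)
    (b : Fin k → B) :
    (List.ofFn fun t => (a t, b t)).prod = ((List.ofFn a).prod, (List.ofFn b).prod) := by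
  refine Prod.ext ?_ ?_
  · rw [← MonoidHom.coe_fst, map_list_prod, List.map_ofFn]
    rfl
  · rw [← MonoidHom.coe_snd, map_list_prod, List.map_ofFn]
    rfl

section Intertwining

variable {X G : Type*} [Group G]

/-- The group of pairs `(σ, g)`, with `σ` a permutation of `X` and `g : G`, such that `x : X → G`
carries `σ` to conjugation by `g`. That these pairs form a subgroup is what transports the
intertwining relation from letters to words. -/
def conjIntertwiners (x : X → G) : Subgroup (Equiv.Perm X × G) where
  carrier := {p | Function.Semiconj x p.1 (MulAut.conj p.2)}
  one_mem' y := by simp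
  mul_mem' {p q} hp hq := by
    rw [Set.mem_ofPred_eq, Prod.snd_mul, map_mul]
    exact hp.comp_right hq
  inv_mem' {p} hp := by
    rw [Set.mem_ofPred_eq, Prod.snd_inv, map_inv]
    exact hp.inverses_right p.1.apply_symm_apply (MulAut.conj p.2).symm_apply_apply

theorem mem_conjIntertwiners {x : X → G} {σ : Equiv.Perm X} {g : G} :
    (σ, g) ∈ conjIntertwiners x ↔ ∀ y, x (σ y) = g * x y * g⁻¹ :=
  Iff.rfl

theorem apply_eq_iff_commute_of_mem_conjIntertwiners {x : X → G} {σ : Equiv.Perm X} {g : G}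
    (h : (σ, g) ∈ conjIntertwiners x) (l : X) : x (σ l) = x l ↔ Commute g (x l) := by
  rw [mem_conjIntertwiners.mp h l, mul_inv_eq_iff_eq_mul, commute_iff_eq]

end Intertwining

theorem fixed_point_iff_commutes_general {X G : Type*} [Group G] {x : X → G} {k : ℕ}
    {φ : Fin k → Equiv.Perm X} {g : Fin k → G} (h : ∀ t y, x (φ t y) = g t * x y * (g t)⁻¹)
    (ε : Fin k → ℤ) (l : X) :
    ((List.ofFn fun t => φ t ^ ε t).prod l = l →
        Commute (List.ofFn fun t => g t ^ ε t).prod (x l)) ∧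
      (Function.Injective x → Commute (List.ofFn fun t => g t ^ ε t).prod (x l) →
        (List.ofFn fun t => φ t ^ ε t).prod l = l) := by
  have letter_mem (t : Fin k) : (φ t ^ ε t, g t ^ ε t) ∈ conjIntertwiners x :=
    have generator_mem : (φ t, g t) ∈ conjIntertwiners x := mem_conjIntertwiners.mpr (h t)
    zpow_mem generator_mem (ε t)
  have word_mem : ((List.ofFn fun t => φ t ^ ε t).prod, (List.ofFn fun t => g t ^ ε t).prod) ∈
      conjIntertwiners x := by
    rw [← prod_ofFn_prodMk]
    exact list_prod_mem (List.forall_mem_ofFn_iff.mpr letter_mem)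
  have apply_eq_iff_commute := apply_eq_iff_commute_of_mem_conjIntertwiners word_mem l
  exact ⟨fun fixed => apply_eq_iff_commute.mp (congrArg x fixed),
    fun injective commute => injective (apply_eq_iff_commute.mpr commute)⟩

theorem toEnvelGroup_act' {X : Type*} [Rack X] (a b : X) :
    (Rack.toEnvelGroup X (Rack.act' a b) : Rack.EnvelGroup X) =
      (Rack.toEnvelGroup X a * Rack.toEnvelGroup X b * (Rack.toEnvelGroup X a)⁻¹ :
        Rack.EnvelGroup X) :=
  (Rack.toEnvelGroup X).map_act

/-- Let X be a rack, k ∈ ℕ, i₁, …, i_k, l ∈ X and ε₁, …, ε_k ∈ {1, −1}.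
If l is a fixed point of φ_{i₁}^{ε₁} ⋯ φ_{i_k}^{ε_k}, then
x_{i₁}^{ε₁} ⋯ x_{i_k}^{ε_k} commutes with x_l in the enveloping group G_X;
the converse holds if X is injective. -/
theorem fixed_point_iff_commutes {X : Type*} [Rack X] {k : ℕ} (i : Fin k → X) (ε : Fin k → ℤ)
    (hε : ∀ t, ε t = 1 ∨ ε t = -1) (l : X) :
    (((List.ofFn fun t => (Rack.act' (i t) : Equiv.Perm X) ^ ε t).prod l = l →
        Commute ((List.ofFn fun t => (Rack.toEnvelGroup X (i t) : Rack.EnvelGroup X) ^ ε t).prod)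
          (Rack.toEnvelGroup X l : Rack.EnvelGroup X)) ∧
      ((Function.Injective fun j : X => (Rack.toEnvelGroup X j : Rack.EnvelGroup X)) →
        Commute ((List.ofFn fun t => (Rack.toEnvelGroup X (i t) : Rack.EnvelGroup X) ^ ε t).prod)
          (Rack.toEnvelGroup X l : Rack.EnvelGroup X) →
        (List.ofFn fun t => (Rack.act' (i t) : Equiv.Perm X) ^ ε t).prod l = l)) :=
  fixed_point_iff_commutes_general (fun t => toEnvelGroup_act' (i t)) ε l
end

section
/- Let X be an injective rack. Then the inner group Inn(X) is isomorphic to the quotient G_X/Z(G_X) of the enveloping group by its center. -/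
open Quandles

/-!
The rack action of `X` on itself extends to an action of `G_X` on `X` whose image is `Inn(X)`, so
`Inn(X)` is `G_X` modulo the kernel of this action. In `G_X`, conjugation by `g` sends the generator
`x_i` to `x_{g · i}`. As these generate `G_X`, `g` is central if and only if `x_{g · i} = x_i` for
all `i`; when `X` is injective, this says that `g` acts trivially.
-/

section EnvelGroup

open Rack

variable {X : Type*} [Rack X]

theorem closure_range_toEnvelGroup :
    Subgroup.closure (Set.range fun i : X => (toEnvelGroup X i : EnvelGroup X)) = ⊤ := by
  refine (Subgroup.eq_top_iff' _).2 fun g => ?_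
  induction g using Quotient.inductionOn with
  | h a =>
    induction a with
    | unit => exact one_mem _
    | incl i => exact Subgroup.subset_closure ⟨i, rfl⟩
    | mul a b ha hb => exact mul_mem ha hb
    | inv a ha => exact inv_mem ha

theorem range_toEnvelGroup_map {G : Type*} [Group G] (f : X →◃ Quandle.Conj G) :
    (toEnvelGroup.map f).range = Subgroup.closure (Set.range fun i : X => (f i : G)) := by
  rw [MonoidHom.range_eq_map, ← closure_range_toEnvelGroup, MonoidHom.map_closure, ← Set.range_comp]
  rfl

theorem semiconjBy_toEnvelGroup_envelAction (g : EnvelGroup X) (i : X) :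
    SemiconjBy g (toEnvelGroup X i : EnvelGroup X)
      (toEnvelGroup X (envelAction g i) : EnvelGroup X) := by
  have hg : g ∈ Subgroup.closure (Set.range fun j : X => (toEnvelGroup X j : EnvelGroup X)) :=
    (closure_range_toEnvelGroup (X := X)).symm ▸ Subgroup.mem_top g
  induction hg using Subgroup.closure_induction generalizing i with
  | mem _ hj =>
    obtain ⟨j, rfl⟩ := hj
    exact (eq_mul_inv_iff_mul_eq.1 ((toEnvelGroup X).map_act (x := j) (y := i))).symm
  | one => simp
  | mul a b _ _ ha hb =>
    rw [map_mul]
    exact (ha _).mul_left (hb i)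
  | inv a _ ha =>
    have act_inv : envelAction a (envelAction a⁻¹ i) = i := by
      rw [← Equiv.Perm.mul_apply, ← map_mul, mul_inv_cancel, map_one, Equiv.Perm.one_apply]
    simpa only [act_inv] using (ha (envelAction a⁻¹ i)).inv_symm_left

theorem mem_center_envelGroup_iff {g : EnvelGroup X} :
    g ∈ Subgroup.center (EnvelGroup X) ↔
      ∀ i : X, toEnvelGroup X (envelAction g i) = toEnvelGroup X i := by
  rw [Subgroup.center_eq_iInf closure_range_toEnvelGroup]
  simp only [Subgroup.mem_iInf, Set.forall_mem_range, Subgroup.mem_centralizer_singleton_iff,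
    (semiconjBy_toEnvelGroup_envelAction g _).eq]
  exact forall_congr' fun i => mul_left_inj g

theorem ker_envelAction_eq_center
    (hinj : Function.Injective fun i : X => (toEnvelGroup X i : EnvelGroup X)) :
    (envelAction (R := X)).ker = Subgroup.center (EnvelGroup X) := by
  ext g
  rw [MonoidHom.mem_ker, mem_center_envelGroup_iff, Equiv.ext_iff]
  exact forall_congr' fun i => hinj.eq_iff.symm

end EnvelGroup

/-- Let X be an injective rack.  Then the inner group Inn(X), i.e. the subgroup of the
symmetric group of X generated by the permutations φ_i, is isomorphic to the quotient
G_X/Z(G_X) of the enveloping group by its center. -/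
theorem inn_iso_envel_mod_center {X : Type*} [Rack X]
    (hinj : Function.Injective fun i : X => (Rack.toEnvelGroup X i : Rack.EnvelGroup X)) :
    Nonempty
      ((Subgroup.closure (Set.range fun i : X => (Rack.act' i : Equiv.Perm X))) ≃*
        Rack.EnvelGroup X ⧸ Subgroup.center (Rack.EnvelGroup X)) := by
  have range_eq : (Rack.envelAction (R := X)).range =
      Subgroup.closure (Set.range fun i : X => (Rack.act' i : Equiv.Perm X)) :=
    range_toEnvelGroup_map (Rack.toConj X)
  rw [← range_eq]
  exact ⟨(QuotientGroup.quotientKerEquivRange Rack.envelAction).symm.trans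
    (QuotientGroup.quotientMulEquivOfEq (ker_envelAction_eq_center hinj))⟩
end

section
/- Let X be a finite indecomposable rack. Then all permutations φ_i, i ∈ X, have the same order n, and moreover x_i^n = x_j^n in the enveloping group G_X for all i, j ∈ X. -/
open Quandles

/-!
Write `e x` for the generator of `G_X` at `x`. Conjugation by `e x` realises `φ_x` on the
generators, so `e x ^ n` commutes with `e k` whenever `φ_x ^ n` fixes `k`. Hence, as soon as
`φ_x ^ n = 1`, conjugating by `e k` gives `e (k ◃ x) ^ n = e x ^ n`. Since `φ_{k ◃ x}` is a
conjugate of `φ_x`, the order of `φ_x` is also unchanged, and everything propagates along the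
orbits of the inner group.
-/

section

open Rack

variable {X G : Type*} [Rack X] [Group G]

/-- The inner group `Inn(X)` of a rack, as a subgroup of the permutations of `X`; `Rack.act' i` is
the left translation `φ_i`. The rack is indecomposable when `Inn(X)` has a single orbit. -/
def rackInnerGroup (X : Type*) [Rack X] : Subgroup (Equiv.Perm X) :=
  Subgroup.closure (Set.range fun i : X => (act' i : Equiv.Perm X))

theorem iff_of_mem_orbit_rackInnerGroup {p : X → Prop} (hp : ∀ k x, p (k ◃ x) ↔ p x) {x y : X}
    (hxy : y ∈ MulAction.orbit (rackInnerGroup X) x) : p y ↔ p x := by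
  obtain ⟨⟨g, hg⟩, rfl⟩ := hxy
  change p (g x) ↔ p x
  induction hg using Subgroup.closure_induction generalizing x with
  | mem _ hk =>
    obtain ⟨k, rfl⟩ := hk
    exact hp k x
  | one => rfl
  | mul a b _ _ ha hb => exact ha.trans hb
  | inv a _ ha => simpa using (ha (x := a⁻¹ x)).symm

theorem orderOf_act'_act (k x : X) :
    orderOf (act' (k ◃ x) : Equiv.Perm X) = orderOf (act' x : Equiv.Perm X) := by
  rw [ad_conj, ← MulAut.conj_apply, MulEquiv.orderOf_eq]

theorem act'_act_pow_eq_one_iff {k x : X} {n : ℕ} :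
    (act' (k ◃ x) : Equiv.Perm X) ^ n = 1 ↔ (act' x : Equiv.Perm X) ^ n = 1 := by
  rw [← orderOf_dvd_iff_pow_eq_one, orderOf_act'_act, orderOf_dvd_iff_pow_eq_one]

theorem map_act'_pow_apply (f : X →◃ Quandle.Conj G) (x y : X) (n : ℕ) :
    f (((act' x : Equiv.Perm X) ^ n) y) = (f x : G) ^ n * f y * ((f x : G) ^ n)⁻¹ := by
  have hsemi : Function.Semiconj f (act' x) (MulAut.conj (f x : G)) := fun _ => f.map_act
  rw [← Equiv.Perm.iterate_eq_pow, (hsemi.iterate_right n).eq, ← MulAut.conj_apply, map_pow]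
  exact smul_iterate_apply (MulAut.conj (f x : G)) n (f y : G)

theorem commute_map_pow_of_act'_pow_apply_eq (f : X →◃ Quandle.Conj G) {x y : X} {n : ℕ}
    (h : ((act' x : Equiv.Perm X) ^ n) y = y) : Commute ((f x : G) ^ n) (f y) := by
  have hconj := map_act'_pow_apply f x y n
  rw [h] at hconj
  exact (eq_mul_inv_iff_mul_eq.mp hconj).symm

theorem map_act_pow_of_act'_pow_apply_eq (f : X →◃ Quandle.Conj G) {k x : X} {n : ℕ}
    (h : ((act' x : Equiv.Perm X) ^ n) k = k) : (f (k ◃ x) : G) ^ n = (f x : G) ^ n := by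
  rw [f.map_act, Quandle.conj_act_eq_conj, conj_pow]
  exact (commute_map_pow_of_act'_pow_apply_eq f h).symm.mul_inv_cancel

theorem orderOf_act'_eq_of_mem_orbit {i j : X}
    (hij : j ∈ MulAction.orbit (rackInnerGroup X) i) :
    orderOf (act' i : Equiv.Perm X) = orderOf (act' j : Equiv.Perm X) :=
  (iff_of_mem_orbit_rackInnerGroup
    (p := fun x => orderOf (act' i : Equiv.Perm X) = orderOf (act' x : Equiv.Perm X))
    (fun k x => by rw [orderOf_act'_act]) hij).mpr rfl

theorem map_pow_eq_of_mem_orbit (f : X →◃ Quandle.Conj G) {i j : X}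
    (hij : j ∈ MulAction.orbit (rackInnerGroup X) i) {n : ℕ}
    (hn : (act' i : Equiv.Perm X) ^ n = 1) : (f i : G) ^ n = (f j : G) ^ n := by
  -- The equality of powers passes between x and k ◃ x only while φ_x ^ n = 1, so `p` carries both.
  let p (x : X) : Prop := (act' x : Equiv.Perm X) ^ n = 1 ∧ (f i : G) ^ n = (f x : G) ^ n
  have hp (k x : X) : p (k ◃ x) ↔ p x :=
    (and_congr_left' act'_act_pow_eq_one_iff).trans <| and_congr_right fun hx => by
      rw [map_act_pow_of_act'_pow_apply_eq f (by rw [hx, Equiv.Perm.one_apply])]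
  exact ((iff_of_mem_orbit_rackInnerGroup hp hij).mpr ⟨hn, rfl⟩).2

theorem same_order_and_equal_powers_general (f : X →◃ Quandle.Conj G) {i j : X}
    (hij : j ∈ MulAction.orbit (rackInnerGroup X) i) :
    orderOf (act' i : Equiv.Perm X) = orderOf (act' j : Equiv.Perm X) ∧
      ∀ n : ℕ, (act' i : Equiv.Perm X) ^ n = 1 → (f i : G) ^ n = (f j : G) ^ n :=
  ⟨orderOf_act'_eq_of_mem_orbit hij, fun _ => map_pow_eq_of_mem_orbit f hij⟩

end

/-- Let X be a finite indecomposable rack (the inner group, generated by the φ_i,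
acts transitively on X).  Then all permutations φ_i have the same order n, and
x_i^n = x_j^n in the enveloping group G_X for all i, j ∈ X. -/
theorem same_order_and_equal_powers {X : Type*} [Rack X] [Finite X]
    (hind : ∀ x y : X,
      ∃ f ∈ Subgroup.closure (Set.range fun i : X => (Rack.act' i : Equiv.Perm X)), f x = y)
    (i j : X) :
    orderOf (Rack.act' i : Equiv.Perm X) = orderOf (Rack.act' j : Equiv.Perm X) ∧
      (Rack.toEnvelGroup X i : Rack.EnvelGroup X) ^ orderOf (Rack.act' i : Equiv.Perm X) =
        (Rack.toEnvelGroup X j : Rack.EnvelGroup X) ^ orderOf (Rack.act' i : Equiv.Perm X) := by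
  obtain ⟨g, hg, hgi⟩ := hind i j
  exact (same_order_and_equal_powers_general (Rack.toEnvelGroup X) ⟨⟨g, hg⟩, hgi⟩).imp_right
    fun hpow => hpow _ (pow_orderOf_eq_one _)
end

section
/- Let X be a finite indecomposable rack, fix an element 1 ∈ X, and let n be the order of the permutation φ_1. Then x_1^n generates a normal (indeed central) subgroup of the enveloping group G_X, and the quotient group Ḡ_X = G_X / ⟨x_1^n⟩ is finite. -/
open Quandles

/-! Writing `z = x₁ⁿ`, the conjugation `g xᵢ g⁻¹ = x_{g • i}` shows that the kernel of the action
of `G_X` on `X` is central, so `z` is central and `Z(G_X)` has finite index. So does the center of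
the quotient by `⟨z⟩`, whose commutator subgroup is therefore finite by Schur's theorem. Since `X`
is indecomposable, the generators `xᵢ` are all conjugate, so the abelianization of the quotient is
cyclic, generated by the image of `x₁`, whose order divides `n`. -/

open Subgroup
open scoped commutatorElement

section GroupTheory

variable {G : Type*} [Group G]

theorem normal_of_le_center {H : Subgroup G} (hH : H ≤ center G) : H.Normal :=
  ⟨fun a ha g => by rwa [mem_center_iff.1 (hH ha) g, mul_inv_cancel_right]⟩

theorem commutatorElement_mul_mul_of_mem_center (g h : G) {z w : G} (hz : z ∈ center G)
    (hw : w ∈ center G) : ⁅g * z, h * w⁆ = ⁅g, h⁆ := by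
  have hz' (k : G) : ⁅z, k⁆ = 1 :=
    commutatorElement_eq_one_iff_mul_comm.2 (mem_center_iff.1 hz k).symm
  have hw' (k : G) : ⁅k, w⁆ = 1 :=
    commutatorElement_eq_one_iff_mul_comm.2 (mem_center_iff.1 hw k)
  simp [commutatorElement_mul_left_eq_conj_mul, commutatorElement_mul_right_eq_mul_conj, hz', hw']

theorem finite_commutatorSet_of_finiteIndex_center [(center G).FiniteIndex] :
    Finite (commutatorSet G) := by
  refine (Set.finite_range fun p : (G ⧸ center G) × (G ⧸ center G) =>
    ⁅p.1.out, p.2.out⁆).subset ?_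
  rintro _ ⟨g, h, rfl⟩
  obtain ⟨z, hz⟩ := QuotientGroup.mk_out_eq_mul (center G) g
  obtain ⟨w, hw⟩ := QuotientGroup.mk_out_eq_mul (center G) h
  refine ⟨(g, h), ?_⟩
  simp only [hz, hw, commutatorElement_mul_mul_of_mem_center g h z.2 w.2]

theorem finite_of_finiteIndex_center_of_finite_abelianization [(center G).FiniteIndex]
    [Finite (Abelianization G)] : Finite G := by
  have := finite_commutatorSet_of_finiteIndex_center (G := G)
  have : Finite (G ⧸ commutator G) := ‹Finite (Abelianization G)›
  exact Finite.of_subgroup_quotient (commutator G)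

theorem finiteIndex_center_of_surjective {H : Type*} [Group H] [(center G).FiniteIndex]
    {f : G →* H} (hf : Function.Surjective f) : (center H).FiniteIndex := by
  have hle : (center G).map f ≤ center H := by
    rintro _ ⟨z, hz, rfl⟩
    refine mem_center_iff.2 (hf.forall.2 fun g => ?_)
    rw [← map_mul, ← map_mul, mem_center_iff.1 hz g]
  have : ((center G).map f).FiniteIndex :=
    ⟨ne_zero_of_dvd_ne_zero FiniteIndex.index_ne_zero (index_map_dvd _ hf)⟩
  exact finiteIndex_of_le hle

theorem zpowers_abelianization_of_eq_top_of_isConj {S : Set G} (hS : closure S = ⊤) {x : G}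
    (hx : ∀ y ∈ S, IsConj x y) : zpowers (Abelianization.of x) = ⊤ := by
  have hmap : (closure S).map Abelianization.of ≤ zpowers (Abelianization.of x) := by
    rw [map_le_iff_le_comap, closure_le]
    intro y hy
    have hxy : Abelianization.of x = Abelianization.of y :=
      isConj_iff_eq.1 (Abelianization.of.map_isConj (hx y hy))
    exact hxy ▸ mem_zpowers (Abelianization.of x)
  rwa [hS, ← MonoidHom.range_eq_map, MonoidHom.range_eq_top.2 QuotientGroup.mk_surjective,
    top_le_iff] at hmap

theorem finite_of_isConj_of_isOfFinOrder [(center G).FiniteIndex] {S : Set G}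
    (hS : closure S = ⊤) {x : G} (hconj : ∀ y ∈ S, IsConj x y) (hx : IsOfFinOrder x) :
    Finite G := by
  have hfin : Finite (zpowers (Abelianization.of x)) :=
    finite_zpowers.2 (Abelianization.of.isOfFinOrder hx)
  rw [zpowers_abelianization_of_eq_top_of_isConj hS hconj] at hfin
  have : Finite (Abelianization G) := Finite.of_equiv _ topEquiv.toEquiv
  exact finite_of_finiteIndex_center_of_finite_abelianization

theorem finite_quotient_zpowers_pow_of_isConj [(center G).FiniteIndex] {S : Set G}
    (hS : closure S = ⊤) {x : G} (hconj : ∀ y ∈ S, IsConj x y) {n : ℕ} (hn : n ≠ 0)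
    [(zpowers (x ^ n)).Normal] : Finite (G ⧸ zpowers (x ^ n)) := by
  let π := QuotientGroup.mk' (zpowers (x ^ n))
  have hπ : Function.Surjective π := QuotientGroup.mk'_surjective _
  have := finiteIndex_center_of_surjective hπ
  have hgen : closure (π '' S) = ⊤ := by
    rw [← MonoidHom.map_closure, hS, map_top_of_surjective π hπ]
  have hord : IsOfFinOrder (π x) := by
    refine isOfFinOrder_iff_pow_eq_one.2 ⟨n, hn.bot_lt, ?_⟩
    rw [← map_pow]
    exact (QuotientGroup.eq_one_iff _).2 (mem_zpowers _)
  exact finite_of_isConj_of_isOfFinOrder hgen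
    (Set.forall_mem_image.2 fun y hy => π.map_isConj (hconj y hy)) hord

end GroupTheory

section Rack

variable {X : Type*} [Rack X]

variable (X) in
/-- The inner group `Inn(X)`, generated by the left translations `φ_i`. -/
abbrev innerGroup : Subgroup (Equiv.Perm X) := closure (Set.range Rack.act')

/-- The generator `x_i` of `G_X`, typed as an element of `Rack.EnvelGroup X` rather than of its
conjugation quandle. -/
abbrev envelGen (i : X) : Rack.EnvelGroup X := Rack.toEnvelGroup X i

variable (X) in
theorem closure_range_envelGen : closure (Set.range (envelGen (X := X))) = ⊤ := by
  refine (eq_top_iff' _).2 fun g => ?_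
  induction g using Quotient.inductionOn with
  | h a =>
    induction a with
    | unit => exact one_mem _
    | incl i => exact subset_closure ⟨i, rfl⟩
    | mul a b ha hb => exact mul_mem ha hb
    | inv a ha => exact inv_mem ha

theorem envelGen_act (i j : X) : envelGen (i ◃ j) = envelGen i * envelGen j * (envelGen i)⁻¹ :=
  (Rack.toEnvelGroup X).map_act

theorem envelAction_envelGen (i : X) : Rack.envelAction (envelGen i) = Rack.act' i := rfl

variable (X) in
theorem range_envelAction : (Rack.envelAction (R := X)).range = innerGroup X := by
  rw [MonoidHom.range_eq_map, ← closure_range_envelGen, MonoidHom.map_closure, ← Set.range_comp]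
  rfl

theorem envelGen_envelAction (g : Rack.EnvelGroup X) (i : X) :
    envelGen (Rack.envelAction g i) = g * envelGen i * g⁻¹ := by
  have hg : g ∈ closure (Set.range envelGen) := closure_range_envelGen X ▸ mem_top g
  induction hg using closure_induction generalizing i with
  | mem _ hx =>
    obtain ⟨j, rfl⟩ := hx
    exact envelGen_act j i
  | one => simp
  | mul g h _ _ ihg ihh => simp [ihg, ihh, mul_assoc]
  | inv g _ ih =>
    have h := ih (Rack.envelAction g⁻¹ i)
    rw [← Equiv.Perm.mul_apply, ← map_mul, mul_inv_cancel, map_one, Equiv.Perm.one_apply] at h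
    rw [h]
    group

variable (X) in
theorem ker_envelAction_le_center :
    (Rack.envelAction (R := X)).ker ≤ center (Rack.EnvelGroup X) := by
  intro g hg
  have hcomm : closure (Set.range envelGen) ≤ centralizer {g} := by
    rw [closure_le, Set.range_subset_iff]
    intro i
    have h := envelGen_envelAction g i
    rw [MonoidHom.mem_ker.1 hg, Equiv.Perm.one_apply, eq_mul_inv_iff_mul_eq] at h
    exact mem_centralizer_singleton_iff.2 h
  rw [closure_range_envelGen, top_le_iff, centralizer_eq_top_iff_subset,
    Set.singleton_subset_iff] at hcomm
  exact hcomm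

instance finiteIndex_center_envelGroup [Finite (innerGroup X)] :
    (center (Rack.EnvelGroup X)).FiniteIndex := by
  have : Finite (Rack.envelAction (R := X)).range := by
    rw [range_envelAction]
    infer_instance
  exact finiteIndex_of_le (ker_envelAction_le_center X)

theorem envelGen_pow_orderOf_mem_center (i : X) :
    envelGen i ^ orderOf (Rack.act' i) ∈ center (Rack.EnvelGroup X) := by
  apply ker_envelAction_le_center X
  rw [MonoidHom.mem_ker, map_pow, envelAction_envelGen, pow_orderOf_eq_one]

theorem isConj_envelGen [MulAction.IsPretransitive (innerGroup X) X] (i j : X) :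
    IsConj (envelGen i) (envelGen j) := by
  obtain ⟨⟨f, hf⟩, rfl⟩ := MulAction.exists_smul_eq (innerGroup X) i j
  rw [← range_envelAction] at hf
  obtain ⟨g, rfl⟩ := hf
  exact isConj_iff.2 ⟨g, (envelGen_envelAction g i).symm⟩

end Rack

/-- Let X be a finite indecomposable rack, fix 1 ∈ X (here `x1`), and let n be the order
of φ_1.  Then x_1^n generates a normal (indeed central) subgroup of the enveloping group
G_X, and the quotient Ḡ_X = G_X/⟨x_1^n⟩ is finite. -/
theorem envel_quotient_finite {X : Type*} [Rack X] [Finite X]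
    (hind : ∀ x y : X,
      ∃ f ∈ Subgroup.closure (Set.range fun i : X => (Rack.act' i : Equiv.Perm X)), f x = y)
    (x1 : X) :
    (Rack.toEnvelGroup X x1 : Rack.EnvelGroup X) ^ orderOf (Rack.act' x1 : Equiv.Perm X) ∈
        Subgroup.center (Rack.EnvelGroup X) ∧
      (Subgroup.zpowers ((Rack.toEnvelGroup X x1 : Rack.EnvelGroup X) ^
          orderOf (Rack.act' x1 : Equiv.Perm X))).Normal ∧
      Finite (Rack.EnvelGroup X ⧸ Subgroup.zpowers
        ((Rack.toEnvelGroup X x1 : Rack.EnvelGroup X) ^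
          orderOf (Rack.act' x1 : Equiv.Perm X))) := by
  have hz := envelGen_pow_orderOf_mem_center x1
  have hN := normal_of_le_center (zpowers_le.2 hz)
  have : MulAction.IsPretransitive (innerGroup X) X :=
    ⟨fun x y => let ⟨f, hf, hfx⟩ := hind x y; ⟨⟨f, hf⟩, hfx⟩⟩
  exact ⟨hz, hN, finite_quotient_zpowers_pow_of_isConj (closure_range_envelGen X)
    (Set.forall_mem_range.2 (isConj_envelGen x1)) (orderOf_pos _).ne'⟩
end

section
/- Let X be a finite indecomposable rack, fix an element 1 ∈ X, let n be the order of φ_1, and let π : G_X → Ḡ_X = G_X/⟨x_1^n⟩ be the canonical projection. Then: (1) the centralizer of x_1 in G_X equals the preimage under π of the centralizer of π(x_1) in Ḡ_X; (2) if the centralizer of π(x_1) in Ḡ_X is abelian, then the centralizer of x_1 in G_X is abelian; (3) if the centralizer of π(x_1) in Ḡ_X is the cyclic group generated by π(x_1), then the centralizer of x_1 in G_X is the cyclic group generated by x_1. -/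
open Quandles
open scoped commutatorElement

/-! The degree homomorphism `G_X → ℤ` sends every generator to `1`. Commutators have degree `0`,
while `x₁ ^ k` has degree `k`, so a normal subgroup contained in `⟨x₁⟩` meets the commutator
subgroup trivially. Hence two elements of `G_X` commute as soon as their images in the quotient
do. -/

section Group

variable {G H : Type*} [Group G] [Group H] {f : G →* H}

theorem commute_map_iff_of_disjoint_ker_commutator (hf : Disjoint f.ker (commutator G)) {a b : G} :
    Commute (f a) (f b) ↔ Commute a b := by
  refine ⟨fun hab => ?_, fun hab => hab.map f⟩
  have hker : ⁅a, b⁆ ∈ f.ker := by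
    rw [MonoidHom.mem_ker, map_commutatorElement, commutatorElement_eq_one_iff_commute]
    exact hab
  have hcomm : ⁅a, b⁆ ∈ commutator G :=
    Subgroup.commutator_mem_commutator (Subgroup.mem_top a) (Subgroup.mem_top b)
  exact commutatorElement_eq_one_iff_commute.1 (Subgroup.disjoint_def.1 hf hker hcomm)

theorem comap_centralizer_image_of_disjoint_ker_commutator
    (hf : Disjoint f.ker (commutator G)) (s : Set G) :
    (Subgroup.centralizer (f '' s)).comap f = Subgroup.centralizer s := by
  ext g
  simp only [Subgroup.mem_comap, Subgroup.mem_centralizer_iff, Set.forall_mem_image]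
  exact forall₂_congr fun _ _ => commute_map_iff_of_disjoint_ker_commutator hf

theorem disjoint_zpowers_ker_of_not_isOfFinOrder {x : G} (hx : ¬IsOfFinOrder (f x)) :
    Disjoint (Subgroup.zpowers x) f.ker := by
  rw [Subgroup.disjoint_def]
  rintro _ ⟨k, rfl⟩ hk
  have hfk : f x ^ k = f x ^ (0 : ℤ) := by
    rw [zpow_zero, ← map_zpow]
    exact hk
  have hk0 : k = 0 := injective_zpow_iff_not_isOfFinOrder.2 hx hfk
  simp only [hk0, zpow_zero]

end Group

section Rack

variable (X : Type*) [Rack X]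

/-- The degree homomorphism of the enveloping group, which sends every generator to `1`;
`ℤ` is written multiplicatively so that it can serve as a target of `Rack.toEnvelGroup.map`. -/
def envelDegree : Rack.EnvelGroup X →* Multiplicative ℤ :=
  Rack.toEnvelGroup.map
    { toFun := fun _ => Multiplicative.ofAdd (1 : ℤ)
      map_act' := fun {_ _} =>
        (mul_inv_cancel_right (Multiplicative.ofAdd (1 : ℤ)) (Multiplicative.ofAdd 1)).symm }

variable {X}

theorem envelDegree_toEnvelGroup (x : X) :
    envelDegree X (Rack.toEnvelGroup X x) = Multiplicative.ofAdd 1 :=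
  rfl

theorem disjoint_zpowers_toEnvelGroup_commutator (x : X) :
    Disjoint (Subgroup.zpowers (Rack.toEnvelGroup X x : Rack.EnvelGroup X))
      (commutator (Rack.EnvelGroup X)) := by
  have hdeg : ¬IsOfFinOrder (envelDegree X (Rack.toEnvelGroup X x)) := by
    rw [envelDegree_toEnvelGroup, isOfFinOrder_iff_eq_one]
    decide
  exact (disjoint_zpowers_ker_of_not_isOfFinOrder hdeg).mono_right
    (Abelianization.commutator_subset_ker _)

end Rack

theorem envel_centralizer_lift_general {X : Type*} [Rack X] (x1 : X)
    {N : Subgroup (Rack.EnvelGroup X)} [N.Normal]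
    (hN : N ≤ Subgroup.zpowers (Rack.toEnvelGroup X x1 : Rack.EnvelGroup X)) :
    let x : Rack.EnvelGroup X := Rack.toEnvelGroup X x1
    let π := QuotientGroup.mk' N
    Subgroup.centralizer {x} = (Subgroup.centralizer {π x}).comap π ∧
      ((∀ a ∈ Subgroup.centralizer {π x}, ∀ b ∈ Subgroup.centralizer {π x}, a * b = b * a) →
        ∀ a ∈ Subgroup.centralizer {x}, ∀ b ∈ Subgroup.centralizer {x}, a * b = b * a) ∧
      (Subgroup.centralizer {π x} = Subgroup.zpowers (π x) →
        Subgroup.centralizer {x} = Subgroup.zpowers x) := by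
  intro x π
  have hker : π.ker ≤ Subgroup.zpowers x := (QuotientGroup.ker_mk' N).trans_le hN
  have hdisj : Disjoint π.ker (commutator (Rack.EnvelGroup X)) :=
    (disjoint_zpowers_toEnvelGroup_commutator x1).mono_left hker
  have hcent : Subgroup.centralizer {x} = (Subgroup.centralizer {π x}).comap π := by
    rw [← Set.image_singleton (f := π),
      comap_centralizer_image_of_disjoint_ker_commutator hdisj]
  refine ⟨hcent, fun hcomm a ha b hb => ?_, fun hcyc => ?_⟩
  · rw [hcent] at ha hb
    exact (commute_map_iff_of_disjoint_ker_commutator hdisj).1 (hcomm (π a) ha (π b) hb)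
  · rw [hcent, hcyc, ← MonoidHom.map_zpowers, Subgroup.comap_map_eq_self hker]

/-- Let X be a finite indecomposable rack, fix 1 ∈ X (here `x1`), let n be the order of
φ_1, and let π : G_X → Ḡ_X = G_X/⟨x_1^n⟩ be the canonical projection (the subgroup
⟨x_1^n⟩ is normal since x_1^n is central).  Then:
(1) the centralizer of x_1 in G_X equals the preimage under π of the centralizer of
π(x_1) in Ḡ_X;
(2) if the centralizer of π(x_1) in Ḡ_X is abelian, then so is the centralizer of x_1
in G_X;
(3) if the centralizer of π(x_1) in Ḡ_X is the cyclic group generated by π(x_1), then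
the centralizer of x_1 in G_X is the cyclic group generated by x_1. -/
theorem envel_centralizer_lift {X : Type*} [Rack X] [Finite X]
    (hind : ∀ x y : X,
      ∃ f ∈ Subgroup.closure (Set.range fun i : X => (Rack.act' i : Equiv.Perm X)), f x = y)
    (x1 : X)
    [(Subgroup.zpowers ((Rack.toEnvelGroup X x1 : Rack.EnvelGroup X) ^ orderOf (Rack.act' x1 : Equiv.Perm X))).Normal] :
    (Subgroup.centralizer {(Rack.toEnvelGroup X x1 : Rack.EnvelGroup X)} =
        Subgroup.comap (QuotientGroup.mk' (Subgroup.zpowers ((Rack.toEnvelGroup X x1 : Rack.EnvelGroup X) ^ orderOf (Rack.act' x1 : Equiv.Perm X))))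
          (Subgroup.centralizer {(QuotientGroup.mk' (Subgroup.zpowers ((Rack.toEnvelGroup X x1 : Rack.EnvelGroup X) ^ orderOf (Rack.act' x1 : Equiv.Perm X)))) (Rack.toEnvelGroup X x1 : Rack.EnvelGroup X)})) ∧
      ((∀ a ∈ Subgroup.centralizer {(QuotientGroup.mk' (Subgroup.zpowers ((Rack.toEnvelGroup X x1 : Rack.EnvelGroup X) ^ orderOf (Rack.act' x1 : Equiv.Perm X)))) (Rack.toEnvelGroup X x1 : Rack.EnvelGroup X)},
          ∀ b ∈ Subgroup.centralizer {(QuotientGroup.mk' (Subgroup.zpowers ((Rack.toEnvelGroup X x1 : Rack.EnvelGroup X) ^ orderOf (Rack.act' x1 : Equiv.Perm X)))) (Rack.toEnvelGroup X x1 : Rack.EnvelGroup X)}, a * b = b * a) →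
        ∀ a ∈ Subgroup.centralizer {(Rack.toEnvelGroup X x1 : Rack.EnvelGroup X)},
          ∀ b ∈ Subgroup.centralizer {(Rack.toEnvelGroup X x1 : Rack.EnvelGroup X)}, a * b = b * a) ∧
      (Subgroup.centralizer {(QuotientGroup.mk' (Subgroup.zpowers ((Rack.toEnvelGroup X x1 : Rack.EnvelGroup X) ^ orderOf (Rack.act' x1 : Equiv.Perm X)))) (Rack.toEnvelGroup X x1 : Rack.EnvelGroup X)} =
          Subgroup.zpowers ((QuotientGroup.mk' (Subgroup.zpowers ((Rack.toEnvelGroup X x1 : Rack.EnvelGroup X) ^ orderOf (Rack.act' x1 : Equiv.Perm X)))) (Rack.toEnvelGroup X x1 : Rack.EnvelGroup X)) →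
        Subgroup.centralizer {(Rack.toEnvelGroup X x1 : Rack.EnvelGroup X)} = Subgroup.zpowers (Rack.toEnvelGroup X x1 : Rack.EnvelGroup X)) := by
  exact envel_centralizer_lift_general x1
    (Subgroup.zpowers_le.2 (Subgroup.npow_mem_zpowers _ _))
end

section
/- Let G be a group and let X be a finite conjugacy class of G generating G with d = #X > 1, viewed as a rack under conjugation. Then: (1) for all i, j, k ∈ X, if 𝒪(i,j) = 𝒪(i,k) then j = k, and if 𝒪(i,j) = 𝒪(k,j) then i = k; (2) #𝒪(i,j) ≤ d for all i, j ∈ X. -/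
open Quandles

/-- The conjugacy class of `g` in `G`, as a type. -/
def ConjClass (G : Type*) [Group G] (g : G) : Type _ := {h : G // IsConj g h}

namespace ConjClass

variable {G : Type*} [Group G] {g : G}

/-- The conjugacy class of `g`, viewed as a rack under conjugation. -/
instance : Rack (ConjClass G g) where
  act x y := ⟨x.1 * y.1 * x.1⁻¹, y.2.trans (isConj_iff.mpr ⟨x.1, rfl⟩)⟩
  self_distrib := by
    rintro ⟨x, hx⟩ ⟨y, hy⟩ ⟨z, hz⟩
    apply Subtype.ext
    show x * (y * z * y⁻¹) * x⁻¹ = x * y * x⁻¹ * (x * z * x⁻¹) * (x * y * x⁻¹)⁻¹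
    group
  invAct x y := ⟨x.1⁻¹ * y.1 * x.1, y.2.trans (isConj_iff.mpr ⟨x.1⁻¹, by group⟩)⟩
  left_inv := by
    rintro ⟨x, hx⟩ ⟨y, hy⟩
    apply Subtype.ext
    show x⁻¹ * (x * y * x⁻¹) * x = y
    group
  right_inv := by
    rintro ⟨x, hx⟩ ⟨y, hy⟩
    apply Subtype.ext
    show x * (x⁻¹ * y * x) * x⁻¹ = y
    group

end ConjClass

/-- The braiding `c(i,j) = (i ◃ j, i)` on `X × X`, as a permutation. -/
def rackBraid (R : Type*) [Rack R] : Equiv.Perm (R × R) where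
  toFun p := (p.1 ◃ p.2, p.1)
  invFun p := (p.2, p.2 ◃⁻¹ p.1)
  left_inv := by
    rintro ⟨a, b⟩
    simp
  right_inv := by
    rintro ⟨a, b⟩
    simp

/-- The orbit `𝒪(i,j)` of a pair under the cyclic group generated by the braiding. -/
def rackOrbit {R : Type*} [Rack R] (p : R × R) : Set (R × R) :=
  {q | ∃ m : ℤ, (rackBraid R ^ m) p = q}

/-- `kNum i n` is the number of `j` such that the orbit `𝒪(i,j)` has `n` elements. -/
noncomputable def kNum {R : Type*} [Rack R] (i : R) (n : ℕ) : ℕ :=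
  Nat.card {j : R // Nat.card ↥(rackOrbit (i, j)) = n}

/-- `lNum R n` is the number of orbits of the braiding on `R × R` having `n` elements. -/
noncomputable def lNum (R : Type*) [Rack R] (n : ℕ) : ℕ :=
  Nat.card {O : Set (R × R) // (∃ p, O = rackOrbit p) ∧ Nat.card ↥O = n}

/-!
For a rack mapped homomorphically to a group under conjugation, the braiding preserves the product
of the images of the two entries of a pair, because `x * y * x⁻¹ * x = x * y`. When the map is
injective, this product together with one entry determines the pair, so each coordinate projection
is injective on every orbit.
-/

theorem apply_eq_of_sameCycle {α β : Type*} {c : Equiv.Perm α} {φ : α → β}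
    (hφ : ∀ x, φ (c x) = φ x) {x y : α} (hxy : c.SameCycle x y) : φ x = φ y := by
  obtain ⟨m, rfl⟩ := hxy
  induction m using Int.induction_on generalizing x with
  | zero => rfl
  | succ n ih => rw [zpow_add_one, Equiv.Perm.mul_apply, ← ih, hφ]
  | pred n ih => rw [zpow_sub_one, Equiv.Perm.mul_apply, ← ih, ← hφ (c⁻¹ x),
      ← Equiv.Perm.mul_apply, mul_inv_cancel, Equiv.Perm.one_apply]

section Braid

variable {R G : Type*} [Rack R] [Group G] {p q : R × R}

theorem mem_rackOrbit_iff_sameCycle : q ∈ rackOrbit p ↔ (rackBraid R).SameCycle p q :=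
  Iff.rfl

theorem mem_rackOrbit_self (p : R × R) : p ∈ rackOrbit p :=
  mem_rackOrbit_iff_sameCycle.2 .rfl

theorem map_mul_map_rackBraid (f : R →◃ Quandle.Conj G) (p : R × R) :
    (f (rackBraid R p).1 * f (rackBraid R p).2 : G) = f p.1 * f p.2 := by
  change (f (p.1 ◃ p.2) * f p.1 : G) = f p.1 * f p.2
  rw [ShelfHom.map_act, Quandle.conj_act_eq_conj, inv_mul_cancel_right]

theorem map_mul_map_of_mem_rackOrbit (f : R →◃ Quandle.Conj G) (hq : q ∈ rackOrbit p) :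
    (f q.1 * f q.2 : G) = f p.1 * f p.2 :=
  (apply_eq_of_sameCycle (φ := fun r : R × R => (f r.1 * f r.2 : G)) (map_mul_map_rackBraid f)
    (mem_rackOrbit_iff_sameCycle.1 hq)).symm

variable {f : R →◃ Quandle.Conj G}

theorem injOn_fst_rackOrbit (hf : Function.Injective f) (p : R × R) :
    Set.InjOn Prod.fst (rackOrbit p) := by
  intro q hq r hr hfst
  have hprod : (f q.1 * f q.2 : G) = f r.1 * f r.2 :=
    (map_mul_map_of_mem_rackOrbit f hq).trans (map_mul_map_of_mem_rackOrbit f hr).symm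
  rw [hfst] at hprod
  exact Prod.ext hfst (hf (mul_left_cancel hprod))

theorem injOn_snd_rackOrbit (hf : Function.Injective f) (p : R × R) :
    Set.InjOn Prod.snd (rackOrbit p) := by
  intro q hq r hr hsnd
  have hprod : (f q.1 * f q.2 : G) = f r.1 * f r.2 :=
    (map_mul_map_of_mem_rackOrbit f hq).trans (map_mul_map_of_mem_rackOrbit f hr).symm
  rw [hsnd] at hprod
  exact Prod.ext (hf (mul_right_cancel hprod)) hsnd

end Braid

theorem orbit_inj_and_size_bound_general {R G : Type*} [Rack R] [Group G]
    {f : R →◃ Quandle.Conj G} (hf : Function.Injective f) :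
    (∀ i j k : R,
        (rackOrbit (i, j) = rackOrbit (i, k) → j = k) ∧
        (rackOrbit (i, j) = rackOrbit (k, j) → i = k)) ∧
      ∀ i j : R, Cardinal.mk (rackOrbit (i, j)) ≤ Cardinal.mk R := by
  refine ⟨fun i j k => ⟨fun h => ?_, fun h => ?_⟩, fun i j => ?_⟩
  · have hmem : (i, j) ∈ rackOrbit (i, k) := h ▸ mem_rackOrbit_self (i, j)
    exact congrArg Prod.snd (injOn_fst_rackOrbit hf _ hmem (mem_rackOrbit_self _) rfl)
  · have hmem : (i, j) ∈ rackOrbit (k, j) := h ▸ mem_rackOrbit_self (i, j)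
    exact congrArg Prod.fst (injOn_snd_rackOrbit hf _ hmem (mem_rackOrbit_self _) rfl)
  · exact Cardinal.mk_le_of_injective (injOn_fst_rackOrbit hf (i, j)).injective

/-- The inclusion of a conjugacy class into its group, as a homomorphism of racks to the group
under conjugation. -/
def ConjClass.toConj {G : Type*} [Group G] (g : G) : ConjClass G g →◃ Quandle.Conj G where
  toFun := Subtype.val
  map_act' := rfl

theorem ConjClass.toConj_injective {G : Type*} [Group G] (g : G) :
    Function.Injective (ConjClass.toConj g) :=
  Subtype.val_injective

/-- Let X be a finite conjugacy class of a group G which generates G, with d = #X > 1,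
viewed as a rack under conjugation.  Then:
(1) for i, j, k ∈ X, if 𝒪(i,j) = 𝒪(i,k) then j = k, and if 𝒪(i,j) = 𝒪(k,j) then i = k;
(2) #𝒪(i,j) ≤ d for all i, j ∈ X. -/
theorem orbit_inj_and_size_bound {G : Type*} [Group G] (g : G) [Finite (ConjClass G g)]
    (hgen : Subgroup.closure {h : G | IsConj g h} = ⊤)
    (hd : 1 < Nat.card (ConjClass G g)) :
    (∀ i j k : ConjClass G g,
        (rackOrbit (i, j) = rackOrbit (i, k) → j = k) ∧
        (rackOrbit (i, j) = rackOrbit (k, j) → i = k)) ∧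
      ∀ i j : ConjClass G g, Nat.card ↥(rackOrbit (i, j)) ≤ Nat.card (ConjClass G g) := by
  obtain ⟨hinj, hcard⟩ := orbit_inj_and_size_bound_general (ConjClass.toConj_injective g)
  exact ⟨hinj, fun i j => Cardinal.toNat_le_toNat (hcard i j) Cardinal.mk_lt_aleph0⟩
end

section
/- Let G be a group and let X be a finite conjugacy class of G generating G with d = #X > 1, viewed as a rack under conjugation, and let m = d − k_2 − 1. If ∑_{n≥3} ((n−2)/(2n))·k_n ≤ 1, then 2 ≤ m ≤ 6. -/
open Quandles

/-!
The pair `(i, j)` has braid orbit of size `1` exactly when `i = j`, so `m` counts the `j` whose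
orbit `𝒪(i,j)` has at least three elements. Every such `j` contributes a weight
`(n - 2) / (2 n) ≥ 1 / 6` to the sum, whence `m ≤ 6`. On the other hand `c²(i,j) = (i,j)` forces
`i ◃ j = j`; so any `j` moved by `i` is counted, and so is `i ◃ j ≠ j`, which is moved by `i` as
well. Such a `j` exists because otherwise `i` would commute with a generating set of `G`, and its
conjugacy class would be a singleton.
-/

open Finset

theorem hasSum_card_fiber_nsmul {α β M : Type*} [DecidableEq β] [AddCommMonoid M]
    [TopologicalSpace M] (s : Finset α) (r : α → β) (f : β → M) :
    HasSum (fun b => #{a ∈ s | r a = b} • f b) (∑ a ∈ s, f (r a)) := by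
  rw [Finset.sum_comp]
  refine hasSum_sum_of_ne_finset_zero fun b hb => ?_
  have hfiber : #{a ∈ s | r a = b} = 0 :=
    card_eq_zero.2 <| filter_eq_empty_iff.2 fun a ha hab => hb (mem_image.2 ⟨a, ha, hab⟩)
  rw [hfiber, zero_nsmul]

section Rack

variable {R : Type*} [Rack R]

theorem card_rackOrbit (p : R × R) :
    Nat.card (rackOrbit p) = Function.minimalPeriod (rackBraid R) p := by
  have horbit : rackOrbit p = MulAction.orbit (Subgroup.zpowers (rackBraid R)) p := by
    ext q
    simp [rackOrbit, MulAction.mem_orbit_iff, Subgroup.exists_zpowers, Subgroup.smul_def]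
  rw [horbit, Nat.card_congr (MulAction.orbitZPowersEquiv _ p), Nat.card_zmod]
  rfl

theorem card_rackOrbit_pos [Finite R] (p : R × R) : 0 < Nat.card (rackOrbit p) :=
  have : Nonempty (rackOrbit p) := ⟨⟨p, 0, rfl⟩⟩
  Nat.card_pos

theorem act_eq_of_card_rackOrbit_dvd_two {i j : R} (h : Nat.card (rackOrbit (i, j)) ∣ 2) :
    i ◃ j = j := by
  rw [card_rackOrbit, ← Function.isPeriodicPt_iff_minimalPeriod_dvd] at h
  have hperiodic : ((i ◃ j) ◃ i, i ◃ j) = (i, j) := h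
  exact congrArg Prod.snd hperiodic

theorem three_le_card_rackOrbit [Finite R] {i j : R} (h : i ◃ j ≠ j) :
    3 ≤ Nat.card (rackOrbit (i, j)) := by
  have hpos := card_rackOrbit_pos (i, j)
  have hdvd := mt act_eq_of_card_rackOrbit_dvd_two h
  rw [Nat.dvd_prime Nat.prime_two] at hdvd
  omega

theorem kNum_eq_card_filter [Fintype R] (i : R) (n : ℕ) :
    kNum i n = #{j : R | Nat.card (rackOrbit (i, j)) = n} := by
  rw [kNum, Nat.card_eq_fintype_card, Fintype.card_subtype]

/-- The elements `j` whose braid orbit `𝒪(i,j)` has at least three elements; the paper's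
`m = d - k₂ - 1` is the size of this set. -/
noncomputable def longOrbitFinset [Fintype R] (i : R) : Finset R :=
  {j | 3 ≤ Nat.card (rackOrbit (i, j))}

theorem mem_longOrbitFinset [Fintype R] {i j : R} :
    j ∈ longOrbitFinset i ↔ 3 ≤ Nat.card (rackOrbit (i, j)) := by
  simp only [longOrbitFinset, mem_filter, mem_univ, true_and]

theorem two_le_card_longOrbitFinset [Fintype R] {i j : R} (h : i ◃ j ≠ j) :
    2 ≤ #(longOrbitFinset i) := by
  have hmoved : i ◃ i ◃ j ≠ i ◃ j := (Rack.left_cancel i).not.2 h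
  exact one_lt_card.2 ⟨i ◃ j, mem_longOrbitFinset.2 (three_le_card_rackOrbit hmoved),
    j, mem_longOrbitFinset.2 (three_le_card_rackOrbit h), h⟩

theorem hasSum_mul_kNum_add_three {A : Type*} [Semiring A] [TopologicalSpace A] [Fintype R] (i : R)
    (w : ℕ → A) :
    HasSum (fun n => w n * kNum i (n + 3))
      (∑ j ∈ longOrbitFinset i, w (Nat.card (rackOrbit (i, j)) - 3)) := by
  convert hasSum_card_fiber_nsmul (longOrbitFinset i)
    (fun j => Nat.card (rackOrbit (i, j)) - 3) w using 2 with n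
  have hfiber : ({j : R | Nat.card (rackOrbit (i, j)) = n + 3} : Finset R) =
      {j ∈ longOrbitFinset i | Nat.card (rackOrbit (i, j)) - 3 = n} := by
    ext j
    simp only [mem_filter, mem_univ, true_and, mem_longOrbitFinset]
    omega
  rw [kNum_eq_card_filter, hfiber, nsmul_eq_mul, Nat.cast_comm]

theorem one_div_six_le_weight (n : ℕ) : (1 / 6 : ℚ) ≤ ((n : ℚ) + 1) / (2 * ((n : ℚ) + 3)) := by
  rw [div_le_div_iff₀ (by norm_num) (by positivity)]
  linarith [n.cast_nonneg (α := ℚ)]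

theorem card_longOrbitFinset_le_six [Fintype R] {i : R}
    (hS : ∑' n : ℕ, (((n : ℚ) + 1) / (2 * ((n : ℚ) + 3))) * (kNum i (n + 3) : ℚ) ≤ 1) :
    #(longOrbitFinset i) ≤ 6 := by
  set w : ℕ → ℚ := fun n => ((n : ℚ) + 1) / (2 * ((n : ℚ) + 3))
  have hbound : (#(longOrbitFinset i) : ℚ) * (1 / 6) ≤ 1 := calc
    (#(longOrbitFinset i) : ℚ) * (1 / 6)
      = #(longOrbitFinset i) • (1 / 6 : ℚ) := (nsmul_eq_mul _ _).symm
    _ ≤ ∑ j ∈ longOrbitFinset i, w (Nat.card (rackOrbit (i, j)) - 3) :=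
      card_nsmul_le_sum _ _ _ fun _ _ => one_div_six_le_weight _
    _ = ∑' n, w n * kNum i (n + 3) := (hasSum_mul_kNum_add_three i w).tsum_eq.symm
    _ ≤ 1 := hS
  have hcard : (#(longOrbitFinset i) : ℚ) ≤ 6 := by linarith
  exact_mod_cast hcard

end Rack

section Quandle

variable {Q : Type*} [Quandle Q]

theorem card_rackOrbit_eq_one_iff {i j : Q} : Nat.card (rackOrbit (i, j)) = 1 ↔ i = j := by
  rw [card_rackOrbit, Function.minimalPeriod_eq_one_iff_isFixedPt]
  change (i ◃ j, i) = (i, j) ↔ i = j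
  constructor
  · exact congrArg Prod.snd
  · rintro rfl
    rw [Quandle.fix]

theorem kNum_one (i : Q) : kNum i 1 = 1 := by
  simp only [kNum, card_rackOrbit_eq_one_iff, Nat.card_unique]

theorem card_eq_one_add_kNum_two_add_card_longOrbitFinset [Fintype Q] (i : Q) :
    Nat.card Q = 1 + kNum i 2 + #(longOrbitFinset i) := by
  have hsplit (j : Q) : 1 = (if Nat.card (rackOrbit (i, j)) = 1 then 1 else 0) +
      (if Nat.card (rackOrbit (i, j)) = 2 then 1 else 0) +
      (if 3 ≤ Nat.card (rackOrbit (i, j)) then 1 else 0) := by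
    have := card_rackOrbit_pos (i, j)
    split_ifs <;> omega
  calc Nat.card Q = ∑ _j : Q, 1 := by simp
    _ = kNum i 1 + kNum i 2 + #(longOrbitFinset i) := by
      rw [sum_congr rfl fun j _ => hsplit j, sum_add_distrib, sum_add_distrib,
        ← card_filter, ← card_filter, ← card_filter, ← kNum_eq_card_filter, ← kNum_eq_card_filter,
        longOrbitFinset]
    _ = 1 + kNum i 2 + #(longOrbitFinset i) := by rw [kNum_one]

end Quandle

theorem two_le_m_le_six_general {Q : Type*} [Quandle Q] [Finite Q] {i j : Q} (hij : i ◃ j ≠ j)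
    (hS : ∑' n : ℕ, (((n : ℚ) + 1) / (2 * ((n : ℚ) + 3))) * (kNum i (n + 3) : ℚ) ≤ 1) :
    2 ≤ Nat.card Q - kNum i 2 - 1 ∧ Nat.card Q - kNum i 2 - 1 ≤ 6 := by
  have := Fintype.ofFinite Q
  have hm : Nat.card Q - kNum i 2 - 1 = #(longOrbitFinset i) := by
    rw [card_eq_one_add_kNum_two_add_card_longOrbitFinset i]
    omega
  rw [hm]
  exact ⟨two_le_card_longOrbitFinset hij, card_longOrbitFinset_le_six hS⟩

namespace ConjClass

variable {G : Type*} [Group G] {g : G}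

theorem act_eq_iff_commute {x y : ConjClass G g} : x ◃ y = y ↔ Commute x.1 y.1 :=
  Subtype.ext_iff.trans mul_inv_eq_iff_eq_mul

instance : Quandle (ConjClass G g) where
  fix := act_eq_iff_commute.2 (Commute.refl _)

theorem subsingleton_of_mem_center {x : ConjClass G g} (hx : x.1 ∈ Subgroup.center G) :
    Subsingleton (ConjClass G g) :=
  subsingleton_of_forall_eq x fun y =>
    Subtype.ext ((x.2.symm.trans y.2).eq_of_left_mem_center hx).symm

theorem exists_act_ne [Nontrivial (ConjClass G g)]
    (hgen : Subgroup.closure {h : G | IsConj g h} = ⊤) (i : ConjClass G g) :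
    ∃ j, i ◃ j ≠ j := by
  by_contra! hfix
  have hcentral : i.1 ∈ Subgroup.center G := by
    rw [← Subgroup.centralizer_univ, ← Subgroup.coe_top, ← hgen, Subgroup.centralizer_closure]
    exact fun h hh => (act_eq_iff_commute.1 (hfix ⟨h, hh⟩)).symm
  have := subsingleton_of_mem_center hcentral
  exact not_subsingleton (ConjClass G g) this

end ConjClass

/-- Let X be a finite conjugacy class of a group G which generates G, with d = #X > 1,
viewed as a rack under conjugation, and let m = d − k₂ − 1.  If
∑_{n≥3} ((n−2)/(2n))·k_n ≤ 1, then 2 ≤ m ≤ 6.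
(The sum is re-indexed: the term for n = j+3 has coefficient (j+1)/(2(j+3)).) -/
theorem two_le_m_le_six {G : Type*} [Group G] (g : G) [Finite (ConjClass G g)]
    (hgen : Subgroup.closure {h : G | IsConj g h} = ⊤)
    (hd : 1 < Nat.card (ConjClass G g)) (i : ConjClass G g)
    (hS : ∑' n : ℕ, (((n : ℚ) + 1) / (2 * ((n : ℚ) + 3))) * (kNum i (n + 3) : ℚ) ≤ 1) :
    2 ≤ Nat.card (ConjClass G g) - kNum i 2 - 1 ∧
      Nat.card (ConjClass G g) - kNum i 2 - 1 ≤ 6 := by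
  have := Finite.one_lt_card_iff_nontrivial.1 hd
  obtain ⟨j, hij⟩ := ConjClass.exists_act_ne hgen i
  exact two_le_m_le_six_general hij hS
end
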